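/- Let p, q be coprime positive integers and k a squarefree positive integer with k ∉ {1, 2, 3, 6}, and let W be the elliptic curve over ℚ with affine equation y² = x·(x + p·k)·(x − q·k). Then every torsion point of W(ℚ) is 2-torsion: for every rational point P of W, if n·P = O for some positive integer n, then 2·P = O. -/

import Mathlib

open WeierstrassCurve

section Chart

variable {F : Type*} [Field F]

/-- A line `y = L x + c` meets the cubic `y² = x³ + A x + B` in three points; the sum of their
`x/y`-coordinates in terms of the slope and the intercept. -/
lemma sum_div_of_line {A B X₁ X₂ X₃ L c : F} (h₁ : X₁ + X₂ + X₃ = L ^ 2)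
    (h₂ : X₁ * X₂ + (X₁ + X₂) * X₃ = A - 2 * L * c) (h₃ : X₁ * X₂ * X₃ = c ^ 2 - B)
    (hy₁ : L * X₁ + c ≠ 0) (hy₂ : L * X₂ + c ≠ 0) (hc : c ≠ 0)
    (hD : 1 + A * (L / c) ^ 2 - B * (L / c) ^ 3 ≠ 0) :
    L * X₃ + c ≠ 0 ∧
      X₁ / (L * X₁ + c) + X₂ / (L * X₂ + c) + X₃ / (L * X₃ + c) =
        (2 * (A * (L / c)) - 3 * (B * (L / c) ^ 2)) * (1 / c) /
          (1 + A * (L / c) ^ 2 - B * (L / c) ^ 3) := by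
  have hprod : (L * X₁ + c) * (L * X₂ + c) * (L * X₃ + c) =
      c ^ 3 * (1 + A * (L / c) ^ 2 - B * (L / c) ^ 3) := by
    field_simp
    linear_combination L ^ 3 * h₃ + L ^ 2 * c * h₂ + L * c ^ 2 * h₁
  have hy₃ : L * X₃ + c ≠ 0 := by
    intro h
    rw [h, mul_zero] at hprod
    exact mul_ne_zero (pow_ne_zero 3 hc) hD hprod.symm
  refine ⟨hy₃, ?_⟩
  have hnum : X₁ / (L * X₁ + c) + X₂ / (L * X₂ + c) + X₃ / (L * X₃ + c) =
      (2 * A * c * L - 3 * B * L ^ 2) /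
        ((L * X₁ + c) * (L * X₂ + c) * (L * X₃ + c)) := by
    rw [div_add_div _ _ hy₁ hy₂, div_add_div _ _ (mul_ne_zero hy₁ hy₂) hy₃]
    congr 1
    linear_combination 3 * L ^ 2 * h₃ + 2 * L * c * h₂ + c ^ 2 * h₁
  rw [hnum, hprod]
  generalize hE : 1 + A * (L / c) ^ 2 - B * (L / c) ^ 3 = E at *
  field_simp

variable {v : AbsoluteValue F ℝ}

lemma IsNonarchimedean.apply_add_le {t : ℝ} {a b : F} (hv : IsNonarchimedean v)
    (ha : v a ≤ t) (hb : v b ≤ t) : v (a + b) ≤ t :=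
  (hv a b).trans (max_le ha hb)

lemma IsNonarchimedean.apply_sub_le {t : ℝ} {a b : F} (hv : IsNonarchimedean v)
    (ha : v a ≤ t) (hb : v b ≤ t) : v (a - b) ≤ t := by
  rw [sub_eq_add_neg]
  exact hv.apply_add_le ha (by rwa [v.map_neg])

lemma IsNonarchimedean.apply_one_add_of_lt {a : F} (hv : IsNonarchimedean v) (ha : v a < 1) :
    v (1 + a) = 1 := by
  rw [hv.add_eq_left_of_lt (by simpa using ha), v.map_one]

lemma AbsoluteValue.apply_mul_le {a b : F} {s t : ℝ} (ha : v a ≤ s) (hb : v b ≤ t) :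
    v (a * b) ≤ s * t := by
  rw [v.map_mul]
  exact mul_le_mul ha hb (v.nonneg b) ((v.nonneg a).trans ha)

lemma AbsoluteValue.apply_pow_le {a : F} {t : ℝ} (n : ℕ) (ha : v a ≤ t) :
    v (a ^ n) ≤ t ^ n := by
  rw [v.map_pow]
  exact pow_le_pow_left₀ (v.nonneg a) ha n

lemma IsNonarchimedean.apply_natCast_mul_le {a : F} {t : ℝ} (hv : IsNonarchimedean v) (n : ℕ)
    (ha : v a ≤ t) : v (n * a) ≤ t :=
  hv.nmul_le.trans ha

variable {A B : F} {α ρ : ℝ}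

/-- The slope in the coordinates `(x/y, 1/y)` of a chord through two points near the origin. -/
lemma chord_bound (hv : IsNonarchimedean v) (hα : α < 1) (hA : v A ≤ α) (hB : v B ≤ α)
    (hρ₀ : 0 ≤ ρ) (hρ : ρ ≤ 1) {X₁ X₂ y₁ y₂ L c : F}
    (e₁ : y₁ ^ 2 = X₁ ^ 3 + A * X₁ + B) (e₂ : y₂ ^ 2 = X₂ ^ 3 + A * X₂ + B)
    (hy₁ : y₁ ≠ 0) (hy₂ : y₂ ≠ 0) (hX : X₁ ≠ X₂) (hl₁ : y₁ = L * X₁ + c) (hl₂ : y₂ = L * X₂ + c)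
    (hz₁ : v (X₁ / y₁) ≤ ρ) (hw₁ : v (1 / y₁) ≤ ρ ^ 3)
    (hz₂ : v (X₂ / y₂) ≤ ρ) (hw₂ : v (1 / y₂) ≤ ρ ^ 3) :
    c ≠ 0 ∧ v (L / c) ≤ ρ ^ 2 := by
  have hα₀ : 0 ≤ α := (v.nonneg A).trans hA
  obtain ⟨z₁, hz₁e⟩ : ∃ z, z = X₁ / y₁ := ⟨_, rfl⟩
  obtain ⟨z₂, hz₂e⟩ : ∃ z, z = X₂ / y₂ := ⟨_, rfl⟩
  obtain ⟨w₁, hw₁e⟩ : ∃ z, z = 1 / y₁ := ⟨_, rfl⟩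
  obtain ⟨w₂, hw₂e⟩ : ∃ z, z = 1 / y₂ := ⟨_, rfl⟩
  have f₁ : w₁ = z₁ ^ 3 + A * z₁ * w₁ ^ 2 + B * w₁ ^ 3 := by
    rw [hz₁e, hw₁e]; field_simp; linear_combination e₁
  have f₂ : w₂ = z₂ ^ 3 + A * z₂ * w₂ ^ 2 + B * w₂ ^ 3 := by
    rw [hz₂e, hw₂e]; field_simp; linear_combination e₂
  have g₁ : L * z₁ + c * w₁ = 1 := by
    rw [hz₁e, hw₁e]; field_simp; exact hl₁.symm
  have g₂ : L * z₂ + c * w₂ = 1 := by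
    rw [hz₂e, hw₂e]; field_simp; exact hl₂.symm
  rw [← hz₁e] at hz₁
  rw [← hz₂e] at hz₂
  rw [← hw₁e] at hw₁
  rw [← hw₂e] at hw₂
  have hρ3 : ρ ^ 3 ≤ 1 := pow_le_one₀ hρ₀ hρ
  set δ := -(A * (z₂ * (w₁ + w₂)) + B * (w₁ ^ 2 + w₁ * w₂ + w₂ ^ 2)) with hδ
  have hδv : v (1 + δ) = 1 := by
    refine hv.apply_one_add_of_lt (lt_of_le_of_lt ?_ hα)
    rw [hδ, v.map_neg]
    have b₁ : v w₁ ≤ 1 := hw₁.trans hρ3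
    have b₂ : v w₂ ≤ 1 := hw₂.trans hρ3
    have b₃ : v z₂ ≤ 1 := hz₂.trans hρ
    refine hv.apply_add_le ?_ ?_
    · have := v.apply_mul_le hA (v.apply_mul_le b₃ (hv.apply_add_le b₁ b₂))
      simpa using this
    · have := v.apply_mul_le hB (hv.apply_add_le (hv.apply_add_le
        ((v.apply_pow_le 2 b₁).trans_eq (one_pow 2)) ((v.apply_mul_le b₁ b₂).trans_eq (one_mul 1)))
        ((v.apply_pow_le 2 b₂).trans_eq (one_pow 2)))
      simpa using this
  have hδ0 : 1 + δ ≠ 0 := by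
    intro h; simp [h] at hδv
  have key : (w₁ - w₂) * (1 + δ) =
      (z₁ - z₂) * (z₁ ^ 2 + z₁ * z₂ + z₂ ^ 2 + A * w₁ ^ 2) := by
    rw [hδ]; linear_combination f₁ - f₂
  have hz : z₁ ≠ z₂ := by
    intro h
    rw [h, sub_self, zero_mul] at key
    have hw : w₁ = w₂ := sub_eq_zero.1 ((mul_eq_zero.1 key).resolve_right hδ0)
    have hy : y₁ = y₂ := by
      rw [hw₁e, hw₂e] at hw
      simpa using hw
    rw [hz₁e, hz₂e, hy] at h
    exact hX ((div_left_inj' hy₂).1 h)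
  have hz' : z₁ - z₂ ≠ 0 := sub_ne_zero.2 hz
  have hLc : L * (z₁ - z₂) = -(c * (w₁ - w₂)) := by linear_combination g₁ - g₂
  have hc : c ≠ 0 := by
    rintro rfl
    rw [zero_mul, neg_zero] at hLc
    have hL : L = 0 := (mul_eq_zero.1 hLc).resolve_right hz'
    rw [hL] at hl₁
    exact hy₁ (by simpa using hl₁)
  refine ⟨hc, ?_⟩
  have hmul : L / c * (1 + δ) = -(z₁ ^ 2 + z₁ * z₂ + z₂ ^ 2 + A * w₁ ^ 2) := by
    rw [div_mul_eq_mul_div, div_eq_iff hc]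
    apply mul_right_cancel₀ hz'
    linear_combination (1 + δ) * hLc - c * key
  have := congrArg v hmul
  rw [v.map_mul, hδv, mul_one, v.map_neg] at this
  rw [this]
  refine hv.apply_add_le (hv.apply_add_le (hv.apply_add_le (v.apply_pow_le 2 hz₁) ?_)
    (v.apply_pow_le 2 hz₂)) ?_
  · simpa [sq] using v.apply_mul_le hz₁ hz₂
  · calc v (A * w₁ ^ 2) ≤ α * (ρ ^ 3) ^ 2 := v.apply_mul_le hA (v.apply_pow_le 2 hw₁)
      _ ≤ 1 * (ρ ^ 3) ^ 2 := by gcongr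
      _ = ρ ^ 2 * ρ ^ 4 := by ring
      _ ≤ ρ ^ 2 * 1 := by gcongr; exact pow_le_one₀ hρ₀ hρ
      _ = ρ ^ 2 := mul_one _

/-- The slope in the coordinates `(x/y, 1/y)` of the tangent at a point near the origin. -/
lemma tangent_bound (hv : IsNonarchimedean v) (hα : α < 1) (hA : v A ≤ α) (hB : v B ≤ α)
    (hρ₀ : 0 ≤ ρ) (hρ : ρ ≤ 1) {X y L c : F}
    (e : y ^ 2 = X ^ 3 + A * X + B) (hy : y ≠ 0) (h2y : 2 * y ≠ 0)
    (hl : y = L * X + c) (hL : 2 * y * L = 3 * X ^ 2 + A)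
    (hz : v (X / y) ≤ ρ) (hw : v (1 / y) ≤ ρ ^ 3) :
    c ≠ 0 ∧ v (L / c) ≤ ρ ^ 2 := by
  have hα₀ : 0 ≤ α := (v.nonneg A).trans hA
  obtain ⟨z, hze⟩ : ∃ z, z = X / y := ⟨_, rfl⟩
  obtain ⟨w, hwe⟩ : ∃ w, w = 1 / y := ⟨_, rfl⟩
  rw [← hze] at hz
  rw [← hwe] at hw
  have hX : X = z * y := by rw [hze]; field_simp
  have hwy : w * y = 1 := by rw [hwe]; field_simp
  have hρ3 : ρ ^ 3 ≤ 1 := pow_le_one₀ hρ₀ hρ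
  have b₁ : v w ≤ 1 := hw.trans hρ3
  have b₃ : v z ≤ 1 := hz.trans hρ
  set δ := -(2 * (A * (z * w)) + 3 * (B * w ^ 2)) with hδ
  have hδv : v (1 + δ) = 1 := by
    refine hv.apply_one_add_of_lt (lt_of_le_of_lt ?_ hα)
    rw [hδ, v.map_neg]
    refine hv.apply_add_le ?_ ?_
    · exact hv.apply_natCast_mul_le 2 (by simpa using v.apply_mul_le hA (v.apply_mul_le b₃ b₁))
    · exact hv.apply_natCast_mul_le 3 (by simpa using v.apply_mul_le hB (v.apply_pow_le 2 b₁))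
  have hδ0 : 1 + δ ≠ 0 := by
    intro h; simp [h] at hδv
  have hc2 : 2 * y * c = -(y ^ 2 * (1 + δ)) := by
    have : y ^ 2 * δ = -(2 * A * X + 3 * B) := by
      rw [hδ, hX]
      linear_combination (-(2 * A * z * y) - 3 * B * (w * y + 1)) * hwy
    linear_combination this + 2 * y * (-hl) - X * hL + 3 * e
  have hc : c ≠ 0 := by
    rintro rfl
    rw [mul_zero, eq_comm, neg_eq_zero] at hc2
    exact mul_ne_zero (pow_ne_zero 2 hy) hδ0 hc2
  refine ⟨hc, ?_⟩
  have hmul : L / c * (1 + δ) = -(3 * z ^ 2 + A * w ^ 2) := by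
    rw [div_mul_eq_mul_div, div_eq_iff hc]
    apply mul_left_cancel₀ h2y
    apply mul_left_cancel₀ (pow_ne_zero 2 hy)
    have : y ^ 2 * (3 * z ^ 2 + A * w ^ 2) = 3 * X ^ 2 + A := by
      rw [hX]; linear_combination A * (w * y + 1) * hwy
    linear_combination y ^ 2 * (1 + δ) * hL + 2 * y * c * this + (3 * X ^ 2 + A) * hc2
  have := congrArg v hmul
  rw [v.map_mul, hδv, mul_one, v.map_neg] at this
  rw [this]
  refine hv.apply_add_le (hv.apply_natCast_mul_le 3 (v.apply_pow_le 2 hz)) ?_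
  calc v (A * w ^ 2) ≤ α * (ρ ^ 3) ^ 2 := v.apply_mul_le hA (v.apply_pow_le 2 hw)
      _ ≤ 1 * (ρ ^ 3) ^ 2 := by gcongr
      _ = ρ ^ 2 * ρ ^ 4 := by ring
      _ ≤ ρ ^ 2 * 1 := by gcongr; exact pow_le_one₀ hρ₀ hρ
      _ = ρ ^ 2 := mul_one _

/-- If a line meets the cubic in two points near the origin, then the third point of intersection
is near the origin as well, and the `x/y`-coordinates nearly add up to zero. -/
lemma third_point_bound (hv : IsNonarchimedean v) (hα : α < 1) (hA : v A ≤ α) (hB : v B ≤ α)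
    (hρ₀ : 0 ≤ ρ) (hρ : ρ ≤ 1) {X₁ X₂ X₃ L c : F} (h₁ : X₁ + X₂ + X₃ = L ^ 2)
    (h₂ : X₁ * X₂ + (X₁ + X₂) * X₃ = A - 2 * L * c) (h₃ : X₁ * X₂ * X₃ = c ^ 2 - B)
    (hy₁ : L * X₁ + c ≠ 0) (hy₂ : L * X₂ + c ≠ 0) (hc : c ≠ 0) (hL : v (L / c) ≤ ρ ^ 2)
    (hz₁ : v (X₁ / (L * X₁ + c)) ≤ ρ) (hw₁ : v (1 / (L * X₁ + c)) ≤ ρ ^ 3)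
    (hz₂ : v (X₂ / (L * X₂ + c)) ≤ ρ) :
    L * X₃ + c ≠ 0 ∧ v (X₃ / (L * X₃ + c)) ≤ ρ ∧ v (1 / (L * X₃ + c)) ≤ ρ ^ 3 ∧
      v (X₁ / (L * X₁ + c) + X₂ / (L * X₂ + c) + X₃ / (L * X₃ + c)) ≤ α * ρ := by
  have hα₀ : 0 ≤ α := (v.nonneg A).trans hA
  have hρ2 : ρ ^ 2 ≤ 1 := pow_le_one₀ hρ₀ hρ
  have hL1 : v (L / c) ≤ 1 := hL.trans hρ2
  have hD : v (1 + (A * (L / c) ^ 2 - B * (L / c) ^ 3)) = 1 := by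
    refine hv.apply_one_add_of_lt (lt_of_le_of_lt ?_ hα)
    exact hv.apply_sub_le (by simpa using v.apply_mul_le hA (v.apply_pow_le 2 hL1))
      (by simpa using v.apply_mul_le hB (v.apply_pow_le 3 hL1))
  rw [← add_sub_assoc] at hD
  have hD0 : 1 + A * (L / c) ^ 2 - B * (L / c) ^ 3 ≠ 0 := by
    intro h; simp [h] at hD
  obtain ⟨hy₃, hsum⟩ := sum_div_of_line h₁ h₂ h₃ hy₁ hy₂ hc hD0
  have hν : v (1 / c) ≤ ρ ^ 3 := by
    have : 1 / c = 1 / (L * X₁ + c) + L / c * (X₁ / (L * X₁ + c)) := by field_simp; ring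
    rw [this]
    exact hv.apply_add_le hw₁ ((v.apply_mul_le hL hz₁).trans_eq (by ring))
  have hbound : v (X₁ / (L * X₁ + c) + X₂ / (L * X₂ + c) + X₃ / (L * X₃ + c)) ≤ α * ρ := by
    rw [hsum, map_div₀, hD, div_one]
    have hcoef : v (2 * (A * (L / c)) - 3 * (B * (L / c) ^ 2)) ≤ α :=
      hv.apply_sub_le (hv.apply_natCast_mul_le 2 (by simpa using v.apply_mul_le hA hL1))
        (hv.apply_natCast_mul_le 3 (by simpa using v.apply_mul_le hB (v.apply_pow_le 2 hL1)))
    refine (v.apply_mul_le hcoef hν).trans ?_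
    gcongr
    exact pow_le_of_le_one hρ₀ hρ (by norm_num)
  have hz₃ : v (X₃ / (L * X₃ + c)) ≤ ρ := by
    have : X₃ / (L * X₃ + c) = X₁ / (L * X₁ + c) + X₂ / (L * X₂ + c) + X₃ / (L * X₃ + c) -
        (X₁ / (L * X₁ + c) + X₂ / (L * X₂ + c)) := by ring
    rw [this]
    refine hv.apply_sub_le (hbound.trans ?_) (hv.apply_add_le hz₁ hz₂)
    exact mul_le_of_le_one_left hρ₀ hα.le
  refine ⟨hy₃, hz₃, ?_, hbound⟩
  have : 1 / (L * X₃ + c) = 1 / c - L / c * (X₃ / (L * X₃ + c)) := by field_simp; ring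
  rw [this]
  exact hv.apply_sub_le hν ((v.apply_mul_le hL hz₃).trans_eq (by ring))

end Chart

namespace WeierstrassCurve.Affine.Point

section Near

variable {F : Type*} [Field F] {W : WeierstrassCurve.Affine F}

/-- The local parameter `(x + s) / y` at the origin, extended by `0` to the point at infinity. -/
def param (s : F) : W.Point → F
  | .zero => 0
  | .some x y _ => (x + s) / y

/-- The points whose coordinates `((x + s) / y, 1 / y)` are bounded by `(ρ, ρ³)`. -/
def IsNear (v : AbsoluteValue F ℝ) (s : F) (ρ : ℝ) : W.Point → Prop
  | .zero => True
  | .some x y _ => y ≠ 0 ∧ v ((x + s) / y) ≤ ρ ∧ v (1 / y) ≤ ρ ^ 3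

variable {v : AbsoluteValue F ℝ} {s : F} {α ρ : ℝ}

@[simp]
lemma param_zero : param s (0 : W.Point) = 0 := rfl

lemma isNear_zero : IsNear v s ρ (0 : W.Point) := trivial

/-- The Weierstrass equation after completing the cube. -/
lemma equation_shift (h₁ : W.a₁ = 0) (h₂ : W.a₂ = 3 * s) (h₃ : W.a₃ = 0) {x y : F}
    (h : W.Equation x y) :
    y ^ 2 = (x + s) ^ 3 + (W.a₄ - 3 * s ^ 2) * (x + s) + (W.a₆ - W.a₄ * s + 2 * s ^ 3) := by
  rw [Affine.equation_iff, h₁, h₂, h₃] at h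
  linear_combination h

variable [DecidableEq F]

lemma isNear_add (h₁ : W.a₁ = 0) (h₂ : W.a₂ = 3 * s) (h₃ : W.a₃ = 0)
    (hv : IsNonarchimedean v) (hα : α < 1) (hA : v (W.a₄ - 3 * s ^ 2) ≤ α)
    (hB : v (W.a₆ - W.a₄ * s + 2 * s ^ 3) ≤ α) (hρ₀ : 0 ≤ ρ) (hρ : ρ ≤ 1) {P Q : W.Point}
    (hP : IsNear v s ρ P) (hQ : IsNear v s ρ Q) :
    IsNear v s ρ (P + Q) ∧ v (param s P + param s Q - param s (P + Q)) ≤ α * ρ := by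
  have hα₀ : 0 ≤ α * ρ := mul_nonneg ((v.nonneg _).trans hA) hρ₀
  rcases P with _ | ⟨x₁, y₁, hP₁⟩
  · rw [← zero_def, zero_add]
    exact ⟨hQ, by simpa using hα₀⟩
  rcases Q with _ | ⟨x₂, y₂, hP₂⟩
  · rw [← zero_def, add_zero]
    exact ⟨hP, by simpa using hα₀⟩
  obtain ⟨hy₁, hz₁, hw₁⟩ := hP
  obtain ⟨hy₂, hz₂, hw₂⟩ := hQ
  have hneg : W.negY x₂ y₂ = -y₂ := by simp [Affine.negY, h₁, h₃]
  by_cases hxy : x₁ = x₂ ∧ y₁ = W.negY x₂ y₂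
  · rw [add_of_Y_eq hxy.1 hxy.2]
    refine ⟨isNear_zero, ?_⟩
    rw [hneg] at hxy
    have : param s (.some x₁ y₁ hP₁) + param s (.some x₂ y₂ hP₂) - param s (0 : W.Point) = 0 := by
      simp only [param, hxy.1, hxy.2]
      field_simp
      ring
    rw [this, v.map_zero]
    exact hα₀
  rw [add_some hxy]
  have e₁ := equation_shift h₁ h₂ h₃ hP₁.1
  have e₂ := equation_shift h₁ h₂ h₃ hP₂.1
  generalize hAe : W.a₄ - 3 * s ^ 2 = A at *
  generalize hBe : W.a₆ - W.a₄ * s + 2 * s ^ 3 = B at *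
  obtain ⟨L, hL⟩ : ∃ L, L = W.slope x₁ x₂ y₁ y₂ := ⟨_, rfl⟩
  obtain ⟨c, hc⟩ : ∃ c, c = y₁ - L * (x₁ + s) := ⟨_, rfl⟩
  obtain ⟨X₃, hX₃⟩ : ∃ X₃, X₃ = L ^ 2 - (x₁ + s) - (x₂ + s) := ⟨_, rfl⟩
  have haddX : W.addX x₁ x₂ L + s = X₃ := by
    rw [Affine.addX, h₁, h₂, hX₃]; ring
  have haddY : W.addY x₁ x₂ y₁ L = -(L * X₃ + c) := by
    rw [Affine.addY, Affine.negAddY, Affine.negY, h₁, h₃, ← haddX, hc]; ring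
  have hl₁ : y₁ = L * (x₁ + s) + c := by rw [hc]; ring
  have main : y₂ = L * (x₂ + s) + c ∧ (c ≠ 0 ∧ v (L / c) ≤ ρ ^ 2) ∧
      (x₁ + s) * (x₂ + s) + ((x₁ + s) + (x₂ + s)) * X₃ = A - 2 * L * c ∧
      (x₁ + s) * (x₂ + s) * X₃ = c ^ 2 - B := by
    by_cases hx : x₁ = x₂
    · subst hx
      have hyne : y₁ ≠ -y₂ := fun h ↦ hxy ⟨rfl, by rw [hneg, h]⟩
      have hyy : y₁ = y₂ := by
        have : (y₁ - y₂) * (y₁ + y₂) = 0 := by linear_combination e₁ - e₂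
        rcases mul_eq_zero.1 this with h | h
        · exact sub_eq_zero.1 h
        · exact absurd (eq_neg_of_add_eq_zero_left h) hyne
      subst hyy
      have h2y : 2 * y₁ ≠ 0 := fun h ↦ hyne (eq_neg_of_add_eq_zero_left (by rw [← two_mul, h]))
      have hLs : 2 * y₁ * L = 3 * (x₁ + s) ^ 2 + A := by
        rw [hL, Affine.slope_of_Y_ne rfl (by rwa [hneg]), hneg, h₁, h₂, sub_neg_eq_add, ← two_mul,
          mul_div_cancel₀ _ h2y, ← hAe]
        ring
      refine ⟨hl₁, tangent_bound hv hα hA hB hρ₀ hρ e₁ hy₁ h2y hl₁ hLs hz₁ hw₁, ?_, ?_⟩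
      · rw [hX₃, hc]; linear_combination hLs
      · rw [hX₃, hc]; linear_combination -e₁ + (x₁ + s) * hLs
    · have hx' : x₁ - x₂ ≠ 0 := sub_ne_zero.2 hx
      have hLs : L * (x₁ - x₂) = y₁ - y₂ := by
        rw [hL, Affine.slope_of_X_ne hx, div_mul_cancel₀ _ hx']
      have hl₂ : y₂ = L * (x₂ + s) + c := by rw [hc]; linear_combination hLs
      have hsum : (x₁ + s) * (x₂ + s) + ((x₁ + s) + (x₂ + s)) * X₃ = A - 2 * L * c := by
        apply mul_right_cancel₀ hx'
        rw [hX₃]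
        rw [hl₁] at e₁
        rw [hl₂] at e₂
        linear_combination e₁ - e₂
      refine ⟨hl₂, chord_bound hv hα hA hB hρ₀ hρ e₁ e₂ hy₁ hy₂ (by simpa using hx) hl₁ hl₂
        hz₁ hw₁ hz₂ hw₂, hsum, ?_⟩
      rw [hl₁] at e₁
      rw [hX₃] at hsum ⊢
      linear_combination (x₁ + s) * hsum - e₁
  obtain ⟨hl₂, ⟨hc0, hLc⟩, hs₂, hs₃⟩ := main
  rw [hl₁] at hy₁ hz₁ hw₁
  rw [hl₂] at hy₂ hz₂
  obtain ⟨k₁, k₂, k₃, k₄⟩ := third_point_bound hv hα hA hB hρ₀ hρ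
    (by rw [hX₃]; ring) hs₂ hs₃ hy₁ hy₂ hc0 hLc hz₁ hw₁ hz₂
  simp only [IsNear, param]
  rw [← hL, haddX, haddY, div_neg, div_neg, v.map_neg, v.map_neg, sub_neg_eq_add]
  refine ⟨⟨neg_ne_zero.2 k₁, k₂, k₃⟩, ?_⟩
  rw [← hl₁, ← hl₂] at k₄
  exact k₄

lemma isNear_nsmul (h₁ : W.a₁ = 0) (h₂ : W.a₂ = 3 * s) (h₃ : W.a₃ = 0)
    (hv : IsNonarchimedean v) (hα : α < 1) (hA : v (W.a₄ - 3 * s ^ 2) ≤ α)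
    (hB : v (W.a₆ - W.a₄ * s + 2 * s ^ 3) ≤ α) (hρ₀ : 0 ≤ ρ) (hρ : ρ ≤ 1) {P : W.Point}
    (hP : IsNear v s ρ P) (n : ℕ) :
    IsNear v s ρ (n • P) ∧ v (n * param s P - param s (n • P)) ≤ α * ρ := by
  induction n with
  | zero =>
    rw [zero_nsmul]
    exact ⟨isNear_zero, by simpa using mul_nonneg ((v.nonneg _).trans hA) hρ₀⟩
  | succ n ih =>
    rw [succ_nsmul]
    obtain ⟨h, h'⟩ := isNear_add h₁ h₂ h₃ hv hα hA hB hρ₀ hρ ih.1 hP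
    refine ⟨h, ?_⟩
    have : ((n + 1 : ℕ) : F) * param s P - param s (n • P + P) =
        (n * param s P - param s (n • P)) +
          (param s (n • P) + param s P - param s (n • P + P)) := by
      push_cast; ring
    rw [this]
    exact hv.apply_add_le ih.2 h'

lemma apply_natCast_le_of_nsmul_eq_zero (h₁ : W.a₁ = 0) (h₂ : W.a₂ = 3 * s) (h₃ : W.a₃ = 0)
    (hv : IsNonarchimedean v) (hα : α < 1) (hA : v (W.a₄ - 3 * s ^ 2) ≤ α)
    (hB : v (W.a₆ - W.a₄ * s + 2 * s ^ 3) ≤ α) {x y : F} {h : W.Nonsingular x y}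
    (hx : 1 ≤ v (x + s)) {n : ℕ} (hn : n • Point.some x y h = 0) : v n ≤ α := by
  have hα₀ : 0 ≤ α := (v.nonneg _).trans hA
  set M := v (x + s) with hM
  have hM0 : 0 < M := one_pos.trans_le hx
  have hy : v y ^ 2 = M ^ 3 := by
    rw [← v.map_pow, equation_shift h₁ h₂ h₃ h.1, add_assoc, hv.add_eq_left_of_lt, v.map_pow]
    rw [v.map_pow, ← hM]
    have hαM : α * M < M ^ 3 :=
      calc α * M < 1 * M := by gcongr
        _ = M ^ 1 := by ring
        _ ≤ M ^ 3 := pow_le_pow_right₀ hx (by norm_num)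
    refine lt_of_le_of_lt (hv.apply_add_le (v.apply_mul_le hA le_rfl) (hB.trans ?_)) hαM
    exact le_mul_of_one_le_right hα₀ hx
  have hvy : 0 < v y := by
    refine (v.nonneg y).lt_of_ne fun h0 ↦ ?_
    rw [← h0] at hy
    exact (pow_pos hM0 3).ne (by simpa using hy)
  have hy0 : y ≠ 0 := v.pos_iff.1 hvy
  obtain ⟨ρ, hρe⟩ : ∃ ρ, ρ = v ((x + s) / y) := ⟨_, rfl⟩
  have hρe' : ρ = M / v y := by rw [hρe, map_div₀]
  have hρ₀ : 0 < ρ := by rw [hρe']; positivity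
  have hρsq : ρ ^ 2 = 1 / M := by
    rw [hρe', div_pow, hy]; field_simp
  have hρ1 : ρ ≤ 1 := by
    rw [← pow_le_one_iff_of_nonneg hρ₀.le two_ne_zero, hρsq]
    exact (div_le_one hM0).2 hx
  have hw : v (1 / y) ≤ ρ ^ 3 := by
    rw [← pow_le_pow_iff_left₀ (v.nonneg _) (by positivity) two_ne_zero]
    rw [map_div₀, v.map_one, div_pow, hy, ← pow_mul, mul_comm 3 2, pow_mul, hρsq]
    simp
  have near := (isNear_nsmul h₁ h₂ h₃ hv hα hA hB hρ₀.le hρ1 (P := .some x y h)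
    ⟨hy0, hρe.ge, hw⟩ n).2
  rw [hn, param_zero, sub_zero, v.map_mul] at near
  exact le_of_mul_le_mul_right (near.trans_eq' (by rw [hρe]; rfl)) hρ₀

end Near

/-- On `y² = x (x + a) (x - b)`, the abscissa of a double differs by squares from those of the
points of order two. -/
lemma exists_isSquare_of_two_nsmul_ne_zero {F : Type*} [Field F] [DecidableEq F]
    {W : WeierstrassCurve.Affine F} {a b : F}
    (hW : W = { a₁ := 0, a₂ := a - b, a₃ := 0, a₄ := -(a * b), a₆ := 0 }) (P : W.Point)
    (hP : 2 • P ≠ 0) :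
    ∃ x y, ∃ h : W.Nonsingular x y, 2 • P = .some x y h ∧
      IsSquare x ∧ IsSquare (x + a) ∧ IsSquare (x - b) := by
  have h₁ : W.a₁ = 0 := by rw [hW]
  have h₂ : W.a₂ = a - b := by rw [hW]
  have h₃ : W.a₃ = 0 := by rw [hW]
  have h₄ : W.a₄ = -(a * b) := by rw [hW]
  have h₆ : W.a₆ = 0 := by rw [hW]
  clear hW
  rcases P with _ | ⟨x, y, h⟩
  · exact absurd (nsmul_zero 2) hP
  rw [two_nsmul] at hP ⊢
  by_cases hy : y = W.negY x y
  · exact absurd (add_self_of_Y_eq hy) hP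
  rw [add_self_of_Y_ne hy]
  refine ⟨_, _, _, rfl, ?_⟩
  have e := (Affine.equation_iff ..).1 h.1
  have hneg : W.negY x y = -y := by simp [Affine.negY, h₁, h₃]
  rw [Affine.slope_of_Y_ne rfl hy, hneg]
  rw [hneg] at hy
  simp only [h₁, h₂, h₃, h₄, h₆, zero_mul, add_zero] at e
  have h2y : 2 * y ≠ 0 := fun h0 ↦ hy (eq_neg_of_add_eq_zero_left (by rw [← two_mul, h0]))
  simp only [Affine.addX, h₁, h₂, h₄, zero_mul, sub_zero, sub_neg_eq_add, ← two_mul, add_zero]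
  refine ⟨⟨(x ^ 2 + a * b) / (2 * y), ?_⟩, ⟨(x ^ 2 + 2 * a * x - a * b) / (2 * y), ?_⟩,
    ⟨(x ^ 2 - 2 * b * x - a * b) / (2 * y), ?_⟩⟩
  all_goals
    generalize hYe : 2 * y = Y at *
    have e' : Y ^ 2 = 4 * (x ^ 3 + (a - b) * x ^ 2 + -(a * b) * x) := by
      rw [← hYe, ← e]; ring
    field_simp
  · linear_combination (-(a - b) - 2 * x) * e'
  · linear_combination (-(a - b) - 2 * x + a) * e'
  · linear_combination (-(a - b) - 2 * x - b) * e'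

end WeierstrassCurve.Affine.Point

section Padic

variable {r : ℕ} [hr : Fact r.Prime]

lemma Rat.AbsoluteValue.isNonarchimedean_padic : IsNonarchimedean (Rat.AbsoluteValue.padic r) := by
  intro a b
  simp only [Rat.AbsoluteValue.padic_eq_padicNorm]
  exact_mod_cast padicNorm.nonarchimedean

lemma Rat.AbsoluteValue.padic_sq_ne_inv (t : ℚ) : Rat.AbsoluteValue.padic r t ^ 2 ≠ (r : ℝ)⁻¹ := by
  have hr1 : (1 : ℝ) < r := mod_cast hr.out.one_lt
  rcases eq_or_ne t 0 with rfl | ht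
  · simpa using (zero_lt_one.trans hr1).ne
  obtain ⟨z, hz⟩ := padicNorm.values_discrete (p := r) ht
  rw [Rat.AbsoluteValue.padic_eq_padicNorm, hz]
  push_cast
  rw [← zpow_neg_one (r : ℝ), ← zpow_natCast, ← zpow_mul]
  intro h
  have := zpow_right_injective₀ (by positivity) hr1.ne' h
  omega

lemma Rat.AbsoluteValue.padic_le_inv_of_lt_one {t : ℚ} (h : Rat.AbsoluteValue.padic r t < 1) :
    Rat.AbsoluteValue.padic r t ≤ (r : ℝ)⁻¹ := by
  have hr1 : (1 : ℝ) < r := mod_cast hr.out.one_lt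
  rcases eq_or_ne t 0 with rfl | ht
  · simp
  obtain ⟨z, hz⟩ := padicNorm.values_discrete (p := r) ht
  rw [Rat.AbsoluteValue.padic_eq_padicNorm, hz] at h ⊢
  push_cast at h ⊢
  rw [← zpow_neg_one (r : ℝ), zpow_le_zpow_iff_right₀ hr1]
  rw [zpow_lt_one_iff_right₀ hr1] at h
  omega

lemma Rat.AbsoluteValue.padic_natCast_eq_one {n : ℕ} (h : ¬ r ∣ n) :
    Rat.AbsoluteValue.padic r n = 1 := by
  rw [Rat.AbsoluteValue.padic_eq_padicNorm, (padicNorm.nat_eq_one_iff n).2 h, Rat.cast_one]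

lemma Rat.AbsoluteValue.padic_self : Rat.AbsoluteValue.padic r r = (r : ℝ)⁻¹ := by
  rw [Rat.AbsoluteValue.padic_eq_padicNorm, padicNorm.padicNorm_p_of_prime]
  push_cast
  rfl

lemma Rat.AbsoluteValue.inv_le_padic_of_prime {l : ℕ} (hl : l.Prime) :
    (r : ℝ)⁻¹ ≤ Rat.AbsoluteValue.padic r l := by
  by_cases h : r ∣ l
  · rw [← (Nat.prime_dvd_prime_iff_eq hr.out hl).1 h, Rat.AbsoluteValue.padic_self]
  · rw [Rat.AbsoluteValue.padic_natCast_eq_one h]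
    exact inv_le_one_of_one_le₀ (mod_cast hr.out.one_lt.le)

end Padic

lemma Squarefree.exists_prime_five_le_dvd {k : ℕ} (hk : Squarefree k) (h1 : k ≠ 1) (h2 : k ≠ 2)
    (h3 : k ≠ 3) (h6 : k ≠ 6) : ∃ r, r.Prime ∧ 5 ≤ r ∧ r ∣ k := by
  by_contra! h
  have hsub : k.primeFactors ⊆ {2, 3} := by
    intro r hr
    have hp := Nat.prime_of_mem_primeFactors hr
    have hlt : r < 5 := by
      by_contra! h5
      exact h r hp h5 (Nat.dvd_of_mem_primeFactors hr)
    have := hp.two_le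
    interval_cases r
    · simp
    · simp
    · exact absurd hp (by norm_num)
  have hdvd : k ∣ 6 := by
    have := Finset.prod_dvd_prod_of_subset _ _ (fun p : ℕ ↦ p) hsub
    rwa [Nat.prod_primeFactors_of_squarefree hk] at this
  have hle := Nat.le_of_dvd (by norm_num) hdvd
  interval_cases k <;> omega

/-- A nonzero double on `y² = x (x + a) (x - b)` reduces to a nonsingular point modulo a prime which
divides `a` and `b`, one of them exactly once. -/
lemma one_le_padic_of_isSquare {r : ℕ} [hr : Fact r.Prime] {a b x : ℚ}
    (hab : Rat.AbsoluteValue.padic r a = (r : ℝ)⁻¹ ∨ Rat.AbsoluteValue.padic r b = (r : ℝ)⁻¹)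
    (hx : IsSquare x) (hxa : IsSquare (x + a)) (hxb : IsSquare (x - b)) :
    1 ≤ Rat.AbsoluteValue.padic r x := by
  have hr1 : (1 : ℝ) < r := mod_cast hr.out.one_lt
  by_contra! hlt
  have hxr : Rat.AbsoluteValue.padic r x < (r : ℝ)⁻¹ := by
    refine (Rat.AbsoluteValue.padic_le_inv_of_lt_one hlt).lt_of_ne ?_
    obtain ⟨t, rfl⟩ := hx
    rw [← sq, map_pow]
    exact Rat.AbsoluteValue.padic_sq_ne_inv t
  have key : ∀ c, Rat.AbsoluteValue.padic r c = (r : ℝ)⁻¹ → ¬ IsSquare (x + c) := by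
    rintro c hc ⟨t, ht⟩
    apply Rat.AbsoluteValue.padic_sq_ne_inv (r := r) t
    rw [← map_pow, sq, ← ht,
      Rat.AbsoluteValue.isNonarchimedean_padic.add_eq_right_of_lt (by rwa [hc]), hc]
  rcases hab with h | h
  · exact key a h hxa
  · refine key (-b) ?_ (by rwa [← sub_eq_add_neg])
    rw [AbsoluteValue.map_neg, h]

namespace WeierstrassCurve.Affine.Point

lemma two_nsmul_eq_zero_of_prime_nsmul {r : ℕ} [hr : Fact r.Prime] (hr5 : 5 ≤ r) {a b : ℚ}
    (ha : Rat.AbsoluteValue.padic r a ≤ (r : ℝ)⁻¹) (hb : Rat.AbsoluteValue.padic r b ≤ (r : ℝ)⁻¹)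
    (hab : Rat.AbsoluteValue.padic r a = (r : ℝ)⁻¹ ∨ Rat.AbsoluteValue.padic r b = (r : ℝ)⁻¹)
    {W : WeierstrassCurve.Affine ℚ}
    (hW : W = { a₁ := 0, a₂ := a - b, a₃ := 0, a₄ := -(a * b), a₆ := 0 })
    {l : ℕ} (hl : l.Prime) (P : W.Point) (hP : l • 2 • P = 0) : 2 • P = 0 := by
  by_contra h0
  obtain ⟨x, y, h, h2, hx, hxa, hxb⟩ := exists_isSquare_of_two_nsmul_ne_zero hW P h0
  rw [h2] at hP
  have hv := Rat.AbsoluteValue.isNonarchimedean_padic (r := r)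
  have h1x := one_le_padic_of_isSquare hab hx hxa hxb
  have hr1 : (1 : ℝ) < r := mod_cast hr.out.one_lt
  have hl' := Rat.AbsoluteValue.inv_le_padic_of_prime (r := r) hl
  have h3 : Rat.AbsoluteValue.padic r 3 = 1 := by
    refine mod_cast Rat.AbsoluteValue.padic_natCast_eq_one (r := r) (n := 3) fun hd ↦ ?_
    have := Nat.le_of_dvd (by norm_num) hd
    omega
  have hinv : (r : ℝ)⁻¹ < 1 := inv_lt_one_of_one_lt₀ hr1
  have hinv0 : 0 < (r : ℝ)⁻¹ := by positivity
  generalize (r : ℝ)⁻¹ = ε at *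
  generalize Rat.AbsoluteValue.padic r = v at *
  have hs : v ((a - b) / 3) ≤ ε := by
    rw [map_div₀, h3, div_one]
    exact hv.apply_sub_le ha hb
  have hε : ε ^ 2 < ε := by
    rw [sq]
    exact mul_lt_of_lt_one_right hinv0 hinv
  refine absurd (hl'.trans (apply_natCast_le_of_nsmul_eq_zero (s := (a - b) / 3) (v := v)
    (α := ε ^ 2) (by rw [hW]) (by rw [hW]; ring) (by rw [hW]) hv (hε.trans hinv) ?_ ?_ ?_ hP))
    hε.not_ge
  · rw [hW]
    refine hv.apply_sub_le ?_ (hv.apply_natCast_mul_le 3 (v.apply_pow_le 2 hs))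
    rw [v.map_neg, sq]
    exact v.apply_mul_le ha hb
  · rw [hW]
    refine hv.apply_add_le ?_ (hv.apply_natCast_mul_le 2 ?_)
    · rw [zero_sub, v.map_neg, neg_mul, v.map_neg]
      refine (v.apply_mul_le (v.apply_mul_le ha hb) (hs.trans hinv.le)).trans_eq (by ring)
    · exact (v.apply_pow_le 3 hs).trans (pow_le_pow_of_le_one hinv0.le hinv.le (by norm_num))
  · rwa [hv.add_eq_left_of_lt ((hs.trans_lt hinv).trans_le h1x)]

end WeierstrassCurve.Affine.Point

/-- For coprime positive integers `p, q` and a squarefree positive integer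
`k ∉ {1, 2, 3, 6}`, every rational torsion point of the elliptic curve
`y² = x(x+pk)(x−qk)` is a 2-torsion point. -/
theorem torsion_is_two_torsion (p q k : ℕ) (hp : 0 < p) (hq : 0 < q)
    (hpq : Nat.Coprime p q) (hk : 0 < k) (hksf : Squarefree k)
    (hk1 : k ≠ 1) (hk2 : k ≠ 2) (hk3 : k ≠ 3) (hk6 : k ≠ 6)
    (W : WeierstrassCurve.Affine ℚ)
    (hW : W = { a₁ := 0, a₂ := (p : ℚ) * k - (q : ℚ) * k, a₃ := 0,
                a₄ := -((p : ℚ) * k * ((q : ℚ) * k)), a₆ := 0 })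
    (P : W.Point) (hP : ∃ n : ℕ, 0 < n ∧ n • P = 0) :
    2 • P = 0 := by
  obtain ⟨r, hrp, hr5, m, rfl⟩ := hksf.exists_prime_five_le_dvd hk1 hk2 hk3 hk6
  have : Fact r.Prime := ⟨hrp⟩
  have hm : ¬ r ∣ m := by
    rintro ⟨c, rfl⟩
    exact hrp.not_isUnit (hksf r ⟨c, by ring⟩)
  have hkv : Rat.AbsoluteValue.padic r ((r * m : ℕ) : ℚ) = (r : ℝ)⁻¹ := by
    rw [Nat.cast_mul, map_mul, Rat.AbsoluteValue.padic_self,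
      Rat.AbsoluteValue.padic_natCast_eq_one hm, mul_one]
  have hle : ∀ n : ℕ, Rat.AbsoluteValue.padic r (n * (r * m : ℕ)) ≤ (r : ℝ)⁻¹ := fun n ↦
    Rat.AbsoluteValue.isNonarchimedean_padic.apply_natCast_mul_le n hkv.le
  have heq : ∀ n : ℕ, ¬ r ∣ n → Rat.AbsoluteValue.padic r (n * (r * m : ℕ)) = (r : ℝ)⁻¹ :=
    fun n hn ↦ by rw [map_mul, hkv, Rat.AbsoluteValue.padic_natCast_eq_one hn, one_mul]
  have hor : ¬ r ∣ p ∨ ¬ r ∣ q := by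
    by_contra! h
    exact Nat.not_coprime_of_dvd_of_dvd hrp.one_lt h.1 h.2 hpq
  obtain ⟨n, hn, hnP⟩ := hP
  replace hnP : n • 2 • P = 0 := by rw [smul_comm, hnP, nsmul_zero]
  induction n using induction_on_primes with
  | zero => exact absurd hn (lt_irrefl 0)
  | one => rwa [one_nsmul] at hnP
  | prime_mul l a hl ih =>
    refine ih (Nat.pos_of_mul_pos_left hn) ?_
    rw [smul_comm]
    refine Affine.Point.two_nsmul_eq_zero_of_prime_nsmul hr5 (hle p) (hle q)
      (hor.imp (heq p) (heq q)) hW hl (a • P) ?_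
    rw [smul_comm 2 a P, ← mul_nsmul', hnP]
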